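/- arXiv:1709.08150 — 8 statements merged into one kernel-verified Lean document; each statement's English description precedes it below -/
import Mathlib

section
/- Let F be a finite field with q = |F| elements. Then the sum of the auxiliary matrices over F satisfies Σ_{α∈F} C_α = q·I_{q²} + (J_q − I_q) ⊗ J_q, and the sum over the extended index set F ∪ {y} satisfies Σ_{a∈F∪{y}} C_a = q·I_{q²} + J_{q²}. -/
open Matrix Kronecker BigOperators

noncomputable section

/-- The all-ones matrix. -/
def allOnes (n : Type*) : Matrix n n ℝ := Matrix.of fun _ _ => 1

/-- The auxiliary matrices `C_a` for `a ∈ F ∪ {y}` (formally `Option F`, with `none`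
playing the role of the extra symbol `y`, so that `C_y = I_q ⊗ J_q`). -/
def auxC {F : Type*} [Field F] [Fintype F] [DecidableEq F] :
    Option F → Matrix (F × F) (F × F) ℝ
  | some α => Matrix.of fun p r => if r.2 - p.2 = α * (r.1 - p.1) then 1 else 0
  | none => Matrix.of fun p r => if p.1 = r.1 then 1 else 0

/-- `Σ_{α∈F} C_α = q·I_{q²} + (J_q − I_q) ⊗ J_q` and
    `Σ_{a∈F∪{y}} C_a = q·I_{q²} + J_{q²}`. -/
theorem sum_auxC (F : Type*) [Field F] [Fintype F] [DecidableEq F] :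
    (∑ α : F, auxC (some α)) =
      (Fintype.card F : ℝ) • (1 : Matrix (F × F) (F × F) ℝ) +
        (allOnes F - 1) ⊗ₖ allOnes F ∧
    (∑ a : Option F, auxC a) =
      (Fintype.card F : ℝ) • (1 : Matrix (F × F) (F × F) ℝ) + allOnes (F × F) := by
  have h1 : (∑ α : F, auxC (some α)) =
      (Fintype.card F : ℝ) • (1 : Matrix (F × F) (F × F) ℝ) +
        (allOnes F - 1) ⊗ₖ allOnes F := by
    ext ⟨a, u⟩ ⟨b, v⟩
    rw [Matrix.sum_apply]
    simp only [auxC, allOnes, Matrix.of_apply, Matrix.add_apply, Matrix.smul_apply,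
      Matrix.kroneckerMap_apply, Matrix.sub_apply, Matrix.one_apply, Prod.mk.injEq, smul_eq_mul,
      mul_one]
    by_cases hab : a = b
    · subst hab
      by_cases huv : u = v
      · subst huv
        simp
      · have : v - u ≠ 0 := sub_ne_zero.mpr (Ne.symm huv)
        simp [huv, this]
    · have hne : b - a ≠ 0 := sub_ne_zero.mpr (Ne.symm hab)
      have key : ∀ α : F, (v - u = α * (b - a)) ↔ (v - u) / (b - a) = α := by
        intro α
        rw [div_eq_iff hne]
      simp only [key]
      simp [hab]
  refine ⟨h1, ?_⟩
  rw [Fintype.sum_option, h1]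
  ext ⟨a, u⟩ ⟨b, v⟩
  simp only [auxC, allOnes, Matrix.of_apply, Matrix.add_apply, Matrix.smul_apply,
    Matrix.kroneckerMap_apply, Matrix.sub_apply, Matrix.one_apply, smul_eq_mul, mul_one]
  ring
end
end

section
/- Let F be a finite field with q = |F| elements. For any two distinct indices a, a' ∈ F ∪ {y}, the auxiliary matrices satisfy C_a · C_{a'} = J_{q²}, the all-ones matrix of order q². -/
open Matrix Kronecker BigOperators

noncomputable section

theorem sum_ite_aux {X : Type*} [Fintype X] [DecidableEq X] (P Q : X → Prop)
    [DecidablePred P] [DecidablePred Q] (x₀ : X) (h : ∀ x, (P x ∧ Q x) ↔ x = x₀) :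
    ∑ x, (if P x then (1 : ℝ) else 0) * (if Q x then (1 : ℝ) else 0) = 1 := by
  have : ∀ x, (if P x then (1 : ℝ) else 0) * (if Q x then (1 : ℝ) else 0)
      = if x = x₀ then 1 else 0 := by
    intro x
    simp only [← h x]
    by_cases h1 : P x <;> by_cases h2 : Q x <;> simp [h1, h2]
  simp [this]

/-- For distinct `a, a' ∈ F ∪ {y}`, `C_a · C_{a'} = J_{q²}`. -/
theorem auxC_mul_ne (F : Type*) [Field F] [Fintype F] [DecidableEq F]
    (a a' : Option F) (h : a ≠ a') :
    auxC a * auxC a' = allOnes (F × F) := by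
  ext ⟨a₁, u⟩ ⟨b, v⟩
  rw [Matrix.mul_apply]
  rcases a with _ | α <;> rcases a' with _ | β
  · exact absurd rfl h
  · simp only [auxC, allOnes, Matrix.of_apply]
    apply sum_ite_aux _ _ (a₁, v - β * (b - a₁))
    rintro ⟨c, w⟩
    simp only [Prod.mk.injEq]
    constructor
    · rintro ⟨rfl, h2⟩
      exact ⟨rfl, by linear_combination -h2⟩
    · rintro ⟨rfl, rfl⟩
      exact ⟨rfl, by ring⟩
  · simp only [auxC, allOnes, Matrix.of_apply]
    apply sum_ite_aux _ _ (b, u + α * (b - a₁))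
    rintro ⟨c, w⟩
    simp only [Prod.mk.injEq]
    constructor
    · rintro ⟨h2, rfl⟩
      exact ⟨rfl, by linear_combination h2⟩
    · rintro ⟨rfl, rfl⟩
      exact ⟨by ring, rfl⟩
  · have hne : α - β ≠ 0 := fun e => h (by rw [sub_eq_zero.mp e])
    simp only [auxC, allOnes, Matrix.of_apply]
    obtain ⟨c₀, hc₀⟩ : ∃ c₀, (α - β) * c₀ = v - u + α * a₁ - β * b :=
      ⟨(v - u + α * a₁ - β * b) / (α - β), mul_div_cancel₀ _ hne⟩
    apply sum_ite_aux _ _ (c₀, u + α * (c₀ - a₁))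
    rintro ⟨c, w⟩
    simp only [Prod.mk.injEq]
    constructor
    · rintro ⟨h1, h2⟩
      have hc : c = c₀ := mul_left_cancel₀ hne (by linear_combination -h1 - h2 - hc₀)
      subst hc
      exact ⟨rfl, by linear_combination h1⟩
    · rintro ⟨rfl, rfl⟩
      exact ⟨by ring, by linear_combination -hc₀⟩
end
end

section
/- Let K be a finite field with r = |K| elements. For all nonzero β, β' ∈ K: if β + β' = 0 then Σ_{γ∈K} P_{β·β', (β+β')·γ} = r·I_r, and if β + β' ≠ 0 then Σ_{γ∈K} P_{β·β', (β+β')·γ} = J_r, where I_r and J_r denote the identity and all-ones matrices with rows and columns indexed by K. -/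
open Matrix BigOperators

noncomputable section

/-- The permutation matrix `P_{β,γ}` with `(a,b)`-entry `1` iff `β·(−a+b) = γ`. -/
def permP {K : Type*} [Field K] [DecidableEq K] (β γ : K) : Matrix K K ℝ :=
  Matrix.of fun a b => if β * (-a + b) = γ then 1 else 0

/-- For nonzero `β, β'`:
`Σ_{γ∈K} P_{β·β', (β+β')·γ}` equals `r·I_r` if `β + β' = 0` and `J_r` otherwise. -/
theorem permP_sum (K : Type*) [Field K] [Fintype K] [DecidableEq K]
    (β β' : K) (hβ : β ≠ 0) (hβ' : β' ≠ 0) :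
    (β + β' = 0 →
      (∑ γ : K, permP (β * β') ((β + β') * γ)) =
        (Fintype.card K : ℝ) • (1 : Matrix K K ℝ)) ∧
    (β + β' ≠ 0 →
      (∑ γ : K, permP (β * β') ((β + β') * γ)) = allOnes K) := by
  constructor
  · intro h
    ext a b
    rw [Matrix.sum_apply]
    by_cases hab : a = b
    · subst hab
      simp [permP, h]
    · have h1 : -a + b ≠ 0 := fun h2 => hab (by linear_combination -h2)
      simp [permP, h, hβ, hβ', h1, hab]
  · intro h
    ext a b
    rw [Matrix.sum_apply]
    have key : ∀ γ : K, (β * β' * (-a + b) = (β + β') * γ) ↔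
        (β * β' * (-a + b) / (β + β') = γ) := fun γ => by
      rw [div_eq_iff h, mul_comm γ]
    simp only [permP, allOnes, Matrix.of_apply, key]
    simp
end
end

section
/- Let K be a finite field with r = |K| elements. For all nonzero β, β' ∈ K, consider S := Σ P_{β·β', β·γ' + β'·γ}, the sum over all pairs of distinct nonzero elements γ, γ' ∈ K∖{0} with γ ≠ γ'. If β + β' = 0 then S = (r−2)·(J_r − I_r), and if β + β' ≠ 0 then S = 2·I_r + (r−3)·J_r, where I_r and J_r denote the identity and all-ones matrices with rows and columns indexed by K. -/
open Matrix BigOperators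

noncomputable section

theorem permP_entry {K : Type*} [Field K] [Fintype K] [DecidableEq K]
    (β β' : K) (hβ : β ≠ 0) (a b : K) (T : Finset K)
    (hT : ∀ x, x ∈ T ↔ ¬ (x ≠ 0 ∧ β' * x ≠ β * β' * (-a + b) ∧
      (β + β') * x ≠ β * β' * (-a + b))) :
    (∑ p ∈ Finset.univ.filter (fun p : K × K => p.1 ≠ 0 ∧ p.2 ≠ 0 ∧ p.1 ≠ p.2),
          permP (β * β') (β * p.2 + β' * p.1)) a b = (Fintype.card K : ℝ) - T.card := by
  have h1 : (Fintype.card K : ℝ) - T.card = ((Tᶜ).card : ℝ) := by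
    rw [Finset.card_compl, Nat.cast_sub (Finset.card_le_univ T)]
  rw [h1, Matrix.sum_apply]
  simp only [permP, Matrix.of_apply]
  rw [Finset.sum_boole, Nat.cast_inj, Finset.filter_filter]
  generalize β * β' * (-a + b) = c at hT
  apply Finset.card_bij' (fun p _ => p.1) (fun x _ => (x, (c - β' * x) / β))
  · rintro ⟨x, y⟩ h
    simp only [Finset.mem_filter, Finset.mem_univ, true_and] at h
    obtain ⟨⟨hx, hy, hxy⟩, rfl⟩ := h
    rw [Finset.mem_compl, hT, not_not]
    refine ⟨hx, fun h => ?_, fun h => ?_⟩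
    · exact mul_ne_zero hβ hy (by linear_combination -h)
    · exact hxy (mul_left_cancel₀ hβ (by linear_combination h))
  · intro x h
    rw [Finset.mem_compl, hT, not_not] at h
    obtain ⟨hx, h2, h3⟩ := h
    simp only [Finset.mem_filter, Finset.mem_univ, true_and]
    refine ⟨⟨hx, div_ne_zero (sub_ne_zero.2 (Ne.symm h2)) hβ, fun h => h3 ?_⟩, ?_⟩
    · rw [eq_div_iff hβ] at h
      linear_combination h
    · field_simp
      ring
  · rintro ⟨x, y⟩ h
    simp only [Finset.mem_filter, Finset.mem_univ, true_and] at h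
    obtain ⟨_, rfl⟩ := h
    simp [hβ]
  · intro x h
    rfl

/-- For nonzero `β, β'`, the sum `S = Σ P_{β·β', β·γ' + β'·γ}` over pairs of distinct
nonzero `γ, γ'` equals `(r−2)(J_r − I_r)` if `β + β' = 0` and `2·I_r + (r−3)·J_r`
otherwise. -/
theorem permP_sum_distinct (K : Type*) [Field K] [Fintype K] [DecidableEq K]
    (β β' : K) (hβ : β ≠ 0) (hβ' : β' ≠ 0) :
    (β + β' = 0 →
      (∑ p ∈ Finset.univ.filter (fun p : K × K => p.1 ≠ 0 ∧ p.2 ≠ 0 ∧ p.1 ≠ p.2),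
          permP (β * β') (β * p.2 + β' * p.1)) =
        ((Fintype.card K : ℝ) - 2) • (allOnes K - 1)) ∧
    (β + β' ≠ 0 →
      (∑ p ∈ Finset.univ.filter (fun p : K × K => p.1 ≠ 0 ∧ p.2 ≠ 0 ∧ p.1 ≠ p.2),
          permP (β * β') (β * p.2 + β' * p.1)) =
        (2 : ℝ) • (1 : Matrix K K ℝ) + ((Fintype.card K : ℝ) - 3) • allOnes K) := by
  refine ⟨fun hs => ?_, fun hs => ?_⟩
  · ext a b
    by_cases hab : a = b
    · subst hab
      rw [permP_entry β β' hβ a a Finset.univ (by simp [hs])]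
      simp [allOnes]
    · have hd : -a + b ≠ 0 := fun h => hab (by linear_combination -h)
      rw [permP_entry β β' hβ a b {0, β * (-a + b)} ?_]
      · rw [Finset.card_pair (mul_ne_zero hβ hd).symm]
        simp [allOnes, hab]
      · intro x
        have h3 : (β + β') * x ≠ β * β' * (-a + b) := by
          rw [hs, zero_mul]
          exact (mul_ne_zero (mul_ne_zero hβ hβ') hd).symm
        have h2 : β' * x = β * β' * (-a + b) ↔ x = β * (-a + b) := by
          rw [mul_comm β β', mul_assoc, mul_right_inj' hβ']
        simp only [Finset.mem_insert, Finset.mem_singleton, ne_eq, h2]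
        tauto
  · ext a b
    by_cases hab : a = b
    · subst hab
      rw [permP_entry β β' hβ a a {0} (by intro x; simp [hs, hβ'])]
      simp [allOnes]
      ring
    · have hd : -a + b ≠ 0 := fun h => hab (by linear_combination -h)
      rw [permP_entry β β' hβ a b {0, β * (-a + b), β * β' * (-a + b) / (β + β')} ?_]
      · rw [Finset.card_eq_three.2 ⟨_, _, _, (mul_ne_zero hβ hd).symm,
          (div_ne_zero (mul_ne_zero (mul_ne_zero hβ hβ') hd) hs).symm, ?_, rfl⟩]
        · simp [allOnes, hab]
        · intro h
          rw [eq_div_iff hs] at h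
          exact mul_ne_zero (mul_ne_zero hβ hβ) hd (by linear_combination h)
      · intro x
        have h3 : (β + β') * x = β * β' * (-a + b) ↔ x = β * β' * (-a + b) / (β + β') := by
          rw [eq_div_iff hs, mul_comm x]
        have h2 : β' * x = β * β' * (-a + b) ↔ x = β * (-a + b) := by
          rw [mul_comm β β', mul_assoc, mul_right_inj' hβ']
        simp only [Finset.mem_insert, Finset.mem_singleton, ne_eq, h2, h3]
        tauto
end
end

section
/- In the twin prime power construction, for every nonzero β ∈ K the matrix N_β satisfies N_β^⊤ = N_{−β} (equivalently, the transpose of each block Latin square L_β equals L_{−β} and each auxiliary matrix is symmetric). -/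
open Matrix Kronecker BigOperators

noncomputable section

/-- The matrix `N_β = Σ_{γ∈K∖{0}} P_{β,γ} ⊗ C_{ψ(γ)}` of the twin prime power
construction, where `ψ : K∖{0} → F ∪ {y}` is a fixed bijection. -/
def NN {F K : Type*} [Field F] [Fintype F] [DecidableEq F]
    [Field K] [Fintype K] [DecidableEq K]
    (ψ : {x : K // x ≠ 0} ≃ Option F) (β : K) :
    Matrix (K × (F × F)) (K × (F × F)) ℝ :=
  ∑ γ : {x : K // x ≠ 0}, permP β (γ : K) ⊗ₖ auxC (ψ γ)

theorem permP_transpose' {K : Type*} [Field K] [DecidableEq K] (β γ : K) :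
    (permP β γ)ᵀ = permP (-β) γ := by
  ext a b
  have h : β * (-b + a) = -β * (-a + b) := by ring
  simp only [permP, Matrix.transpose_apply, Matrix.of_apply, h]

theorem auxC_transpose' {F : Type*} [Field F] [Fintype F] [DecidableEq F] (x : Option F) :
    (auxC x)ᵀ = auxC x := by
  ext p r
  cases x with
  | none => simp only [auxC, Matrix.transpose_apply, Matrix.of_apply, eq_comm]
  | some α =>
    have h : (p.2 - r.2 = α * (p.1 - r.1)) ↔ (r.2 - p.2 = α * (r.1 - p.1)) := by
      constructor <;> intro h <;> linear_combination -h
    simp only [auxC, Matrix.transpose_apply, Matrix.of_apply, h]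

/-- In the twin prime power construction, `N_βᵀ = N_{−β}` for every nonzero `β`. -/
theorem NN_transpose {F K : Type*} [Field F] [Fintype F] [DecidableEq F]
    [Field K] [Fintype K] [DecidableEq K]
    (hcard : Fintype.card K = Fintype.card F + 2)
    (ψ : {x : K // x ≠ 0} ≃ Option F) (β : K) (hβ : β ≠ 0) :
    (NN ψ β)ᵀ = NN ψ (-β) := by
  unfold NN
  rw [Matrix.transpose_sum]
  refine Finset.sum_congr rfl fun γ _ => ?_
  rw [← Matrix.kroneckerMap_transpose, permP_transpose', auxC_transpose']
end
end

section
/- In the twin prime power construction, for every nonzero β ∈ K one has N_β · (I_{q+2} ⊗ J_{q²}) = (I_{q+2} ⊗ J_{q²}) · N_β = q·(J_{(q+2)q²} − I_{q+2} ⊗ J_{q²}). -/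
open Matrix Kronecker BigOperators

noncomputable section

theorem auxC_mul_ones {F : Type*} [Field F] [Fintype F] [DecidableEq F] (a : Option F) :
    auxC a * allOnes (F × F) = (Fintype.card F : ℝ) • allOnes (F × F) := by
  ext p r
  cases a with
  | none =>
    simp [auxC, allOnes, Matrix.mul_apply, Fintype.sum_prod_type, -Finset.sum_boole]
    rw [Finset.sum_comm]
    simp [-Finset.sum_boole]
  | some α =>
    simp [auxC, allOnes, Matrix.mul_apply, Fintype.sum_prod_type, sub_eq_iff_eq_add,
      -Finset.sum_boole]

theorem ones_mul_auxC {F : Type*} [Field F] [Fintype F] [DecidableEq F] (a : Option F) :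
    allOnes (F × F) * auxC a = (Fintype.card F : ℝ) • allOnes (F × F) := by
  ext p r
  cases a with
  | none =>
    simp [auxC, allOnes, Matrix.mul_apply, Fintype.sum_prod_type, -Finset.sum_boole]
    rw [Finset.sum_comm]
    simp [-Finset.sum_boole]
  | some α =>
    have h : ∀ x y : F, (r.2 - y = α * (r.1 - x)) ↔ (y = r.2 - α * (r.1 - x)) := by
      intro x y
      constructor <;> intro h
      · rw [← h]; ring
      · rw [h]; ring
    simp [auxC, allOnes, Matrix.mul_apply, Fintype.sum_prod_type, h,
      -Finset.sum_boole]

theorem sum_permP {K : Type*} [Field K] [Fintype K] [DecidableEq K] (β : K) (hβ : β ≠ 0) :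
    ∑ γ : {x : K // x ≠ 0}, permP β (γ : K) = allOnes K - 1 := by
  ext a b
  rw [Matrix.sum_apply]
  by_cases hab : a = b
  · subst hab
    simp only [permP, allOnes, Matrix.of_apply, Matrix.sub_apply, Matrix.one_apply_eq, sub_self]
    apply Finset.sum_eq_zero
    intro γ _
    rw [if_neg]
    intro h
    exact γ.2 (by rw [← h]; ring)
  · have hne : β * (-a + b) ≠ 0 :=
      mul_ne_zero hβ (fun h => hab (neg_add_eq_zero.mp h))
    rw [Finset.sum_eq_single ⟨β * (-a + b), hne⟩]
    · simp [permP, allOnes, Matrix.one_apply_ne hab]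
    · intro γ _ hγ
      simp only [permP, Matrix.of_apply]
      rw [if_neg]
      intro h
      exact hγ (Subtype.ext h.symm)
    · simp

theorem sum_kron_permP {F K : Type*} [Field F] [Fintype F] [DecidableEq F]
    [Field K] [Fintype K] [DecidableEq K] (β : K) (hβ : β ≠ 0) :
    ∑ γ : {x : K // x ≠ 0},
      permP β (γ : K) ⊗ₖ ((Fintype.card F : ℝ) • allOnes (F × F)) =
      (Fintype.card F : ℝ) •
        (allOnes (K × (F × F)) - (1 : Matrix K K ℝ) ⊗ₖ allOnes (F × F)) := by
  ext ⟨a, p⟩ ⟨b, r⟩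
  have h := congrFun (congrFun (sum_permP β hβ) a) b
  rw [Matrix.sum_apply] at h
  simp only [Matrix.sum_apply, Matrix.kroneckerMap_apply, Matrix.smul_apply, Matrix.sub_apply,
    ← Finset.sum_mul, h]
  simp [allOnes, mul_comm]

/-- In the twin prime power construction,
`N_β · (I_{q+2} ⊗ J_{q²}) = (I_{q+2} ⊗ J_{q²}) · N_β = q·(J − I_{q+2} ⊗ J_{q²})`. -/
theorem NN_mul_blockdiag {F K : Type*} [Field F] [Fintype F] [DecidableEq F]
    [Field K] [Fintype K] [DecidableEq K]
    (hcard : Fintype.card K = Fintype.card F + 2)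
    (ψ : {x : K // x ≠ 0} ≃ Option F) (β : K) (hβ : β ≠ 0) :
    NN ψ β * ((1 : Matrix K K ℝ) ⊗ₖ allOnes (F × F)) =
      (Fintype.card F : ℝ) •
        (allOnes (K × (F × F)) - (1 : Matrix K K ℝ) ⊗ₖ allOnes (F × F)) ∧
    ((1 : Matrix K K ℝ) ⊗ₖ allOnes (F × F)) * NN ψ β =
      (Fintype.card F : ℝ) •
        (allOnes (K × (F × F)) - (1 : Matrix K K ℝ) ⊗ₖ allOnes (F × F)) := by
  constructor
  · rw [← sum_kron_permP β hβ, NN, Finset.sum_mul]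
    refine Finset.sum_congr rfl fun γ _ => ?_
    rw [← Matrix.mul_kronecker_mul, Matrix.mul_one, auxC_mul_ones]
  · rw [← sum_kron_permP β hβ, NN, Finset.mul_sum]
    refine Finset.sum_congr rfl fun γ _ => ?_
    rw [← Matrix.mul_kronecker_mul, Matrix.one_mul, ones_mul_auxC]
end
end

section
/- In the twin prime power construction, the sum of the matrices N_β over all nonzero β ∈ K equals (J_{q+2} − I_{q+2}) ⊗ (q·I_{q²} + J_{q²}). -/
open Matrix Kronecker BigOperators

noncomputable section

theorem auxC_sum_aux {F : Type*} [Field F] [Fintype F] [DecidableEq F] (p r : F × F) :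
    ∑ o : Option F, auxC o p r = (Fintype.card F : ℝ) * (if p = r then 1 else 0) + 1 := by
  obtain ⟨p1, p2⟩ := p
  obtain ⟨r1, r2⟩ := r
  rw [Fintype.sum_option]
  simp only [auxC, Matrix.of_apply, Prod.mk.injEq]
  by_cases h : p1 = r1
  · subst h
    by_cases h2 : p2 = r2
    · subst h2
      simp [add_comm]
    · have : r2 - p2 ≠ 0 := sub_ne_zero.mpr (Ne.symm h2)
      simp [h2, this]
  · have hx : r1 - p1 ≠ 0 := sub_ne_zero.mpr (Ne.symm h)
    have : ∀ α : F, (r2 - p2 = α * (r1 - p1)) ↔ ((r2 - p2) / (r1 - p1) = α) := fun α => by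
      rw [div_eq_iff hx]
    simp [h, this]

theorem permP_sum_aux {K : Type*} [Field K] [Fintype K] [DecidableEq K]
    (γ : {x : K // x ≠ 0}) (a b : K) :
    ∑ β : {x : K // x ≠ 0}, permP (β : K) (γ : K) a b = if a = b then 0 else 1 := by
  simp only [permP, Matrix.of_apply]
  by_cases h : a = b
  · subst h
    simp [Ne.symm γ.2]
  · have hx : -a + b ≠ 0 := by
      intro h'
      exact h (neg_add_eq_zero.mp h')
    have : ∀ β : {x : K // x ≠ 0}, ((β : K) * (-a + b) = γ) ↔
        ((⟨(γ : K) / (-a + b), div_ne_zero γ.2 hx⟩ : {x : K // x ≠ 0}) = β) := fun β => by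
      rw [Subtype.ext_iff, div_eq_iff hx, eq_comm]
    simp only [this, h]
    simp

/-- In the twin prime power construction,
`Σ_{β∈K∖{0}} N_β = (J_{q+2} − I_{q+2}) ⊗ (q·I_{q²} + J_{q²})`. -/
theorem NN_sum {F K : Type*} [Field F] [Fintype F] [DecidableEq F]
    [Field K] [Fintype K] [DecidableEq K]
    (hcard : Fintype.card K = Fintype.card F + 2)
    (ψ : {x : K // x ≠ 0} ≃ Option F) :
    (∑ β : {x : K // x ≠ 0}, NN ψ (β : K)) =
      (allOnes K - 1) ⊗ₖ
        ((Fintype.card F : ℝ) • (1 : Matrix (F × F) (F × F) ℝ) + allOnes (F × F)) := by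
  ext ⟨a, p⟩ ⟨b, r⟩
  simp only [NN, Matrix.sum_apply, Matrix.kroneckerMap_apply]
  rw [Finset.sum_comm]
  simp only [← Finset.sum_mul, permP_sum_aux]
  rw [← Finset.mul_sum, Equiv.sum_comp ψ (fun o => auxC o p r), auxC_sum_aux]
  by_cases h : a = b <;> simp [allOnes, Matrix.one_apply, h]
end
end

section
/- In the twin prime power construction, the matrices N_β pairwise commute: for all nonzero β, β' ∈ K, N_β · N_{β'} = N_{β'} · N_β. -/
open Matrix Kronecker BigOperators

noncomputable section

/-- In the twin prime power construction, the matrices `N_β` pairwise commute. -/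
theorem NN_commute {F K : Type*} [Field F] [Fintype F] [DecidableEq F]
    [Field K] [Fintype K] [DecidableEq K]
    (hcard : Fintype.card K = Fintype.card F + 2)
    (ψ : {x : K // x ≠ 0} ≃ Option F) (β β' : K) (hβ : β ≠ 0) (hβ' : β' ≠ 0) :
    NN ψ β * NN ψ β' = NN ψ β' * NN ψ β := by
  have key : ∀ b : K, NN ψ b = Matrix.circulant (fun d => NN ψ b d 0) := by
    intro b
    ext ⟨a, u⟩ ⟨c, v⟩
    simp only [Matrix.circulant_apply, NN, Matrix.sum_apply, Matrix.kroneckerMap_apply]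
    refine Finset.sum_congr rfl fun γ _ => ?_
    congr 1
    · simp [permP, neg_add_eq_sub]
    · cases ψ γ with
      | none => simp [auxC, sub_eq_zero]
      | some α => simp [auxC]
  rw [key β, key β', Matrix.circulant_mul_comm]
end
end
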